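/- arXiv:2111.14477 — 2 statements merged into one kernel-verified Lean document; each statement's English description precedes it below -/
import Mathlib

section
/- Let n = p'²·q, where p' and q are distinct primes, both at least 7, and let A = S(n). Then D_A(n) = 5. -/
open scoped BigOperators

/-- `S` is an `A`-weighted zero-sum sequence in `ZMod n`. -/
def IsWZS {n : ℕ} (A : Set (ZMod n)) {l : ℕ} (S : Fin l → ZMod n) : Prop :=
  ∃ a : Fin l → ZMod n, (∀ i, a i ∈ A) ∧ ∑ i, a i * S i = 0

/-- `S` has a nonempty subsequence which is an `A`-weighted zero-sum sequence. -/
def HasWZSSub {n : ℕ} (A : Set (ZMod n)) {l : ℕ} (S : Fin l → ZMod n) : Prop :=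
  ∃ I : Finset (Fin l), I.Nonempty ∧ ∃ a : Fin l → ZMod n,
    (∀ i ∈ I, a i ∈ A) ∧ ∑ i ∈ I, a i * S i = 0

/-- The `A`-weighted Davenport constant of `ZMod n`: the least positive integer `k`
such that every sequence of `k` elements of `ZMod n` has a nonempty subsequence
which is an `A`-weighted zero-sum sequence. -/
noncomputable def DavW (n : ℕ) (A : Set (ZMod n)) : ℕ :=
  sInf {k | 0 < k ∧ ∀ S : Fin k → ZMod n, HasWZSSub A S}

/-- An `A`-extremal sequence for the Davenport constant: a sequence of length
`D_A(n) - 1` with no nonempty `A`-weighted zero-sum subsequence. -/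
def IsExtremal (n : ℕ) (A : Set (ZMod n)) {l : ℕ} (S : Fin l → ZMod n) : Prop :=
  l = DavW n A - 1 ∧ ¬ HasWZSSub A S

/-- The set of units of `ZMod n`, as a weight set. -/
def USet (n : ℕ) : Set (ZMod n) := {a | IsUnit a}

/-- `S(n)`: the units `a` of `ZMod n` with Jacobi symbol `(a/n) = 1`. -/
def JSet (n : ℕ) : Set (ZMod n) := {a | IsUnit a ∧ jacobiSym (a.val : ℤ) n = 1}

/-- `L(n;p)`: the units `a` of `ZMod n` with `(a/n) = (a/p)`. -/
def LSet (n p : ℕ) : Set (ZMod n) :=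
  {a | IsUnit a ∧ jacobiSym (a.val : ℤ) n = jacobiSym (a.val : ℤ) p}

/-- Two sequences are equivalent with respect to the weight set `A`. -/
def EquivWrt {n : ℕ} (A : Set (ZMod n)) {k : ℕ} (x y : Fin k → ZMod n) : Prop :=
  ∃ (a : Fin k → ZMod n) (c : (ZMod n)ˣ) (σ : Equiv.Perm (Fin k)),
    (∀ i, a i ∈ A) ∧ ∀ i, y (σ i) = (c : ZMod n) * (a i * x i)

/-!
Under the Chinese remainder isomorphism `S(m²q)` becomes `U(m²) × Q`, where `Q` is the set of
nonzero squares modulo `q`: the Jacobi symbol of a unit modulo `m²` is `1`. The same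
argument then treats `U(m) × Q` for any odd `m` prime to `q`.

Upper bound. If every prime `p ∣ m` fails to divide at least two terms of a sequence, then that
sequence has a `U(m)`-weighted zero-sum, prime power by prime power: for odd `p`, every residue
modulo `p ^ k` is a sum of two units. If some `p` fails to divide at most one term, drop that term,
divide the others by `p` and continue modulo `m / p`; each prime factor costs one term. So
`Ω m + 3` terms leave a balanced sequence of `Ω k + 3` terms modulo some `k ∣ m`. If three of them
are nonzero modulo `q`, then by Cauchy–Davenport the whole balanced sequence is also a `Q`-weighted
zero-sum; otherwise at least `Ω k + 1` of them vanish modulo `q`, and these already contain a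
`U(k)`-weighted zero-sum.

Lower bound. A strict divisibility chain `1, p₁, p₁p₂, …` has no `U(m)`-weighted zero-sum, and
neither has `1, -g` with respect to `Q` when `g` is not a square.
-/

section WeightedZeroSum

open scoped Finset Pointwise ArithmeticFunction.Omega

variable {ι κ R R' : Type*}

section Semiring

variable [Semiring R] [Semiring R']

/-- The terms of `x` indexed by `I` form an `A`-weighted zero-sum sequence: the notion underlying
`IsWZS` and `HasWZSSub`, over an arbitrary semiring and index type. -/
def IsWeightedZeroSumOn (A : Set R) (x : ι → R) (I : Finset ι) : Prop :=
  ∃ a : ι → R, (∀ i ∈ I, a i ∈ A) ∧ ∑ i ∈ I, a i * x i = 0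

/-- The family `x` has no nonempty `A`-weighted zero-sum subfamily. -/
def WeightedZeroSumFree (A : Set R) (x : ι → R) : Prop :=
  ∀ I : Finset ι, I.Nonempty → ¬ IsWeightedZeroSumOn A x I

/-- The invertible squares of `R`; for `R = ZMod q` with `q` prime these are the quadratic residues
prime to `q`. -/
def unitSquares (R : Type*) [Monoid R] : Set R := {a | IsUnit a ∧ IsSquare a}

lemma one_mem_unitSquares : (1 : R) ∈ unitSquares R :=
  ⟨isUnit_one, IsSquare.one⟩

lemma IsWeightedZeroSumOn.of_forall_eq_zero {A : Set R} {x : ι → R} {I : Finset ι}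
    (hA : (1 : R) ∈ A) (hx : ∀ i ∈ I, x i = 0) : IsWeightedZeroSumOn A x I :=
  ⟨1, fun _ _ => hA, Finset.sum_eq_zero fun i hi => by rw [hx i hi, mul_zero]⟩

lemma isWeightedZeroSumOn_iff_zero_mem_sum {A : Set R} {x : ι → R} {I : Finset ι} :
    IsWeightedZeroSumOn A x I ↔ (0 : R) ∈ ∑ i ∈ I, (· * x i) '' A := by
  rw [Set.mem_finsetSum]
  constructor
  · rintro ⟨a, ha, hsum⟩
    exact ⟨fun i => a i * x i, fun {i} hi => ⟨a i, ha i hi, rfl⟩, hsum⟩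
  · rintro ⟨g, hg, hsum⟩
    choose! a ha hag using fun i (hi : i ∈ I) => hg hi
    exact ⟨a, ha, (Finset.sum_congr rfl hag).trans hsum⟩

lemma IsWeightedZeroSumOn.prodMk {A : Set R} {B : Set R'} {x : ι → R} {y : ι → R'} {I : Finset ι}
    (hx : IsWeightedZeroSumOn A x I) (hy : IsWeightedZeroSumOn B y I) :
    IsWeightedZeroSumOn (A ×ˢ B) (fun i => (x i, y i)) I := by
  obtain ⟨a, ha, hax⟩ := hx
  obtain ⟨b, hb, hby⟩ := hy
  refine ⟨fun i => (a i, b i), fun i hi => ⟨ha i hi, hb i hi⟩, Prod.ext ?_ ?_⟩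
  · rw [Prod.fst_sum]
    exact hax
  · rw [Prod.snd_sum]
    exact hby

lemma isWeightedZeroSumOn_preimage (e : R ≃+* R') {A : Set R'} {x : ι → R} {I : Finset ι} :
    IsWeightedZeroSumOn (e ⁻¹' A) x I ↔ IsWeightedZeroSumOn A (e ∘ x) I := by
  constructor
  · rintro ⟨a, ha, hsum⟩
    refine ⟨e ∘ a, ha, ?_⟩
    simpa using congrArg e hsum
  · rintro ⟨a, ha, hsum⟩
    refine ⟨e.symm ∘ a, fun i hi => by simpa using ha i hi, e.injective ?_⟩
    simpa using hsum

lemma WeightedZeroSumFree.comp_injective {A : Set R} {x : ι → R} (hx : WeightedZeroSumFree A x)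
    {f : κ → ι} (hf : f.Injective) : WeightedZeroSumFree A (x ∘ f) := by
  rintro I hI ⟨a, ha, hsum⟩
  refine hx (I.map ⟨f, hf⟩) hI.map ⟨Function.extend f a 0, ?_, ?_⟩
  · simpa [hf.extend_apply] using ha
  · simpa [hf.extend_apply] using hsum

lemma WeightedZeroSumFree.preimage_symm_comp (e : R ≃+* R') {A : Set R'} {x : ι → R'}
    (hx : WeightedZeroSumFree A x) : WeightedZeroSumFree (e ⁻¹' A) (e.symm ∘ x) := fun I hI hzero =>
  hx I hI <| by simpa [Function.comp_def] using (isWeightedZeroSumOn_preimage e).1 hzero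

lemma WeightedZeroSumFree.sumElim {A : Set R} {B : Set R'} {x : ι → R} {y : κ → R'}
    (hx : WeightedZeroSumFree A x) (hy : WeightedZeroSumFree B y) :
    WeightedZeroSumFree (A ×ˢ B) (Sum.elim (fun i => (x i, 0)) fun j => (0, y j)) := by
  rintro I hI ⟨a, ha, hsum⟩
  rw [← Finset.toLeft_disjSum_toRight (u := I), Finset.sum_disjSum, Prod.ext_iff] at hsum
  simp only [Sum.elim_inl, Sum.elim_inr, Prod.fst_add, Prod.snd_add, Prod.fst_sum, Prod.snd_sum,
    Prod.fst_mul, Prod.snd_mul, mul_zero, Finset.sum_const_zero, add_zero, zero_add,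
    Prod.fst_zero, Prod.snd_zero] at hsum
  have hleft : I.toLeft = ∅ := Finset.not_nonempty_iff_eq_empty.1 fun h =>
    hx _ h ⟨fun i => (a (.inl i)).1, fun i hi => (ha _ (Finset.mem_toLeft.1 hi)).1, hsum.1⟩
  have hright : I.toRight = ∅ := Finset.not_nonempty_iff_eq_empty.1 fun h =>
    hy _ h ⟨fun j => (a (.inr j)).2, fun j hj => (ha _ (Finset.mem_toRight.1 hj)).2, hsum.2⟩
  rw [← Finset.toLeft_disjSum_toRight (u := I), hleft, hright] at hI
  simp at hI

end Semiring

lemma IsWeightedZeroSumOn.of_subset [Ring R] {A : Set R} {x : ι → R} {I J : Finset ι}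
    (hA : A.Nonempty) (hJI : J ⊆ I) (hJ : ∑ j ∈ J, (· * x j) '' A = Set.univ) :
    IsWeightedZeroSumOn A x I := by
  classical
  obtain ⟨a, ha⟩ := hA
  have hrest : (∑ i ∈ I \ J, (· * x i) '' A).Nonempty :=
    ⟨_, Set.finsetSum_mem_finsetSum _ _ _ fun i _ => ⟨a, ha, rfl⟩⟩
  rw [isWeightedZeroSumOn_iff_zero_mem_sum, ← Finset.sum_sdiff hJI, hJ,
    Set.add_univ hrest]
  exact Set.mem_univ 0

section CommRing

variable [CommRing R]

lemma weightedZeroSumFree_isUnit_of_dvd_chain {k : ℕ} {x : ℕ → R} (hdvd : ∀ i, x i ∣ x (i + 1))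
    (hstrict : ∀ i < k, ¬ x (i + 1) ∣ x i) :
    WeightedZeroSumFree {a : R | IsUnit a} fun i : Fin k => x i := by
  rintro I hI ⟨a, ha, hsum⟩
  set i := I.min' hI
  have hi : i ∈ I := I.min'_mem hI
  have hlater : x (i + 1) ∣ ∑ j ∈ I.erase i, a j * x j := Finset.dvd_sum fun j hj =>
    have hij : i < j := I.min'_lt_of_mem_erase_min' hI hj
    (Nat.rel_of_forall_rel_succ_of_le (· ∣ ·) hdvd hij).mul_left _
  rw [← Finset.add_sum_erase I _ hi, add_eq_zero_iff_eq_neg] at hsum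
  exact hstrict i i.isLt ((ha i hi).dvd_mul_left.1 (hsum ▸ hlater.neg_right))

lemma exists_isUnit_mul_add_mul_eq [IsLocalRing R] (h2 : IsUnit (2 : R)) {x y : R}
    (hx : IsUnit x) (hy : IsUnit y) (t : R) :
    ∃ a b : R, IsUnit a ∧ IsUnit b ∧ a * x + b * y = t := by
  obtain ⟨u, v, hu, hv, rfl⟩ : ∃ u v : R, IsUnit u ∧ IsUnit v ∧ u + v = t := by
    by_cases h : IsUnit (t - 1)
    · exact ⟨1, t - 1, isUnit_one, h, by ring⟩
    · have hadd : IsUnit ((t - 1) + (2 - t)) := by ring_nf; exact isUnit_one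
      have hsub : IsUnit (2 - t) := (IsLocalRing.isUnit_or_isUnit_of_isUnit_add hadd).resolve_left h
      exact ⟨2, t - 2, h2, by simpa using hsub.neg, by ring⟩
  obtain ⟨x, rfl⟩ := hx
  obtain ⟨y, rfl⟩ := hy
  exact ⟨u * ↑x⁻¹, v * ↑y⁻¹, hu.mul x⁻¹.isUnit, hv.mul y⁻¹.isUnit, by simp⟩

end CommRing

section UnitWeights

open ZMod

lemma isLocalRing_zmod_prime_pow {p k : ℕ} (hp : p.Prime) (hk : 0 < k) :
    IsLocalRing (ZMod (p ^ k)) :=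
  have : Fact p.Prime := ⟨hp⟩
  have : Fact (1 < p ^ k) := ⟨Nat.one_lt_pow hk.ne' hp.one_lt⟩
  .of_surjective' (PadicInt.toZModPow k) (ZMod.ringHom_surjective _)

lemma chineseRemainder_natCast {m n : ℕ} (h : m.Coprime n) (a : ℕ) :
    chineseRemainder h a = ((a : ZMod m), (a : ZMod n)) :=
  map_natCast (chineseRemainder h) a

lemma chineseRemainder_preimage_uSet_prod {m n : ℕ} (h : m.Coprime n) :
    chineseRemainder h ⁻¹' (USet m ×ˢ USet n) = USet (m * n) :=
  Set.ext fun _ => Prod.isUnit_iff.symm.trans (MulEquiv.isUnit_map (chineseRemainder h))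

lemma isWeightedZeroSumOn_uSet_prime_pow {p k : ℕ} (hp : p.Prime) (hodd : Odd p) (hk : 0 < k)
    {x : ι → ℕ} {I : Finset ι} (hI : 1 < #{i ∈ I | ¬ p ∣ x i}) :
    IsWeightedZeroSumOn (USet (p ^ k)) (fun i => (x i : ZMod (p ^ k))) I := by
  classical
  have := isLocalRing_zmod_prime_pow hp hk
  have hunit {a : ℕ} (ha : ¬ p ∣ a) : IsUnit (a : ZMod (p ^ k)) :=
    (isUnit_natCast_iff_not_dvd_pow hp hk).2 ha
  have h2 : IsUnit (2 : ZMod (p ^ k)) :=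
    (isUnit_iff_coprime 2 (p ^ k)).2 (Nat.coprime_two_left.2 hodd.pow)
  obtain ⟨i, hi, j, hj, hij⟩ := Finset.one_lt_card.1 hI
  rw [Finset.mem_filter] at hi hj
  refine .of_subset (J := {i, j}) ⟨1, isUnit_one⟩
    (Finset.insert_subset hi.1 (Finset.singleton_subset_iff.2 hj.1)) ?_
  rw [Finset.sum_pair hij, Set.eq_univ_iff_forall]
  intro t
  obtain ⟨a, b, ha, hb, rfl⟩ := exists_isUnit_mul_add_mul_eq h2 (hunit hi.2) (hunit hj.2) t
  exact Set.add_mem_add ⟨a, ha, rfl⟩ ⟨b, hb, rfl⟩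

lemma isWeightedZeroSumOn_uSet_of_forall_prime {m : ℕ} (hm : Odd m) {x : ι → ℕ} {I : Finset ι}
    (hI : ∀ p, p.Prime → p ∣ m → 1 < #{i ∈ I | ¬ p ∣ x i}) :
    IsWeightedZeroSumOn (USet m) (fun i => (x i : ZMod m)) I := by
  induction m using Nat.recOnPosPrimePosCoprime with
  | zero => exact absurd hm Nat.not_odd_zero
  | one => exact ⟨1, fun _ _ => isUnit_one, Subsingleton.elim _ _⟩
  | prime_pow p k hp hk =>
    exact isWeightedZeroSumOn_uSet_prime_pow hp (hm.of_dvd_nat (dvd_pow_self p hk.ne')) hk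
      (hI p hp (dvd_pow_self p hk.ne'))
  | coprime a b _ _ hab iha ihb =>
    rw [Nat.odd_mul] at hm
    rw [← chineseRemainder_preimage_uSet_prod hab, isWeightedZeroSumOn_preimage]
    convert (iha hm.1 fun p hp h => hI p hp (h.mul_right b)).prodMk
      (ihb hm.2 fun p hp h => hI p hp (h.mul_left a)) using 1
    ext i : 1
    exact chineseRemainder_natCast hab (x i)

lemma natCast_mul_eq_zero_of_castHom_eq_zero {d k : ℕ} [NeZero (d * k)] {s : ZMod (d * k)}
    (hs : castHom (dvd_mul_left k d) (ZMod k) s = 0) : (d : ZMod (d * k)) * s = 0 := by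
  obtain ⟨s, rfl⟩ := natCast_zmod_surjective s
  rw [map_natCast, natCast_eq_zero_iff] at hs
  rw [← Nat.cast_mul, natCast_eq_zero_iff]
  exact mul_dvd_mul_left d hs

lemma IsWeightedZeroSumOn.uSet_mul_left {d k : ℕ} (hdk : d * k ≠ 0) {x y : ι → ℕ} {I : Finset ι}
    (hxy : ∀ i ∈ I, x i = d * y i)
    (hy : IsWeightedZeroSumOn (USet k) (fun i => (y i : ZMod k)) I) :
    IsWeightedZeroSumOn (USet (d * k)) (fun i => (x i : ZMod (d * k))) I := by
  have : NeZero (d * k) := ⟨hdk⟩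
  obtain ⟨a, ha, hsum⟩ := hy
  have hlift : ∀ i ∈ I, ∃ u : (ZMod (d * k))ˣ, castHom (dvd_mul_left k d) (ZMod k) u = a i :=
    fun i hi => by
      obtain ⟨u, hu⟩ := unitsMap_surjective (dvd_mul_left k d) (ha i hi).unit
      exact ⟨u, congrArg Units.val hu⟩
  choose! u hu using hlift
  refine ⟨fun i => u i, fun i _ => (u i).isUnit, ?_⟩
  calc ∑ i ∈ I, (u i : ZMod (d * k)) * x i
      = d * ∑ i ∈ I, (u i : ZMod (d * k)) * y i := by
        rw [Finset.mul_sum]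
        refine Finset.sum_congr rfl fun i hi => ?_
        rw [hxy i hi]
        push_cast
        ring
    _ = 0 := natCast_mul_eq_zero_of_castHom_eq_zero <| by
        rw [map_sum, ← hsum]
        refine Finset.sum_congr rfl fun i hi => ?_
        rw [map_mul, map_natCast, hu i hi]

lemma exists_balanced_subset {m c : ℕ} (hm : m ≠ 0) {x : ι → ℕ} {s : Finset ι}
    (hs : Ω m + c ≤ #s) :
    ∃ d k, m = d * k ∧ ∃ T ⊆ s, ∃ y : ι → ℕ, (∀ i ∈ T, x i = d * y i) ∧ Ω k + c ≤ #T ∧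
      ∀ p, p.Prime → p ∣ k → 1 < #{i ∈ T | ¬ p ∣ y i} := by
  induction m using Nat.strong_induction_on generalizing x s with | h m ih
  by_cases hbal : ∀ p, p.Prime → p ∣ m → 1 < #{i ∈ s | ¬ p ∣ x i}
  · exact ⟨1, m, (one_mul m).symm, s, subset_rfl, x, fun i _ => (one_mul _).symm, hs, hbal⟩
  push Not at hbal
  obtain ⟨p, hp, ⟨m', rfl⟩, hcard⟩ := hbal
  have hm' : m' ≠ 0 := right_ne_zero_of_mul hm
  have hsplit := Finset.card_filter_add_card_filter_not (s := s) (p ∣ x ·)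
  rw [ArithmeticFunction.cardFactors_mul hp.ne_zero hm',
    ArithmeticFunction.cardFactors_apply_prime hp] at hs
  obtain ⟨d, k, rfl, T, hT, y, hxy, hTcard, hTbal⟩ := ih m'
    (lt_mul_of_one_lt_left (Nat.pos_of_ne_zero hm') hp.one_lt) hm' (x := fun i => x i / p)
    (s := {i ∈ s | p ∣ x i}) (by omega)
  refine ⟨p * d, k, (mul_assoc p d k).symm, T, hT.trans (Finset.filter_subset _ _), y,
    fun i hi => ?_, hTcard, hTbal⟩
  rw [mul_assoc, ← hxy i hi, Nat.mul_div_cancel' (Finset.mem_filter.1 (hT hi)).2]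

lemma exists_isWeightedZeroSumOn_uSet {m : ℕ} (hm : Odd m) (x : ι → ℕ) {s : Finset ι}
    (hs : Ω m + 1 ≤ #s) :
    ∃ I ⊆ s, I.Nonempty ∧ IsWeightedZeroSumOn (USet m) (fun i => (x i : ZMod m)) I := by
  obtain ⟨d, k, rfl, T, hTs, y, hxy, hTcard, hTbal⟩ :=
    exists_balanced_subset (x := x) hm.pos.ne' hs
  exact ⟨T, hTs, Finset.card_pos.1 (by omega), .uSet_mul_left hm.pos.ne' hxy
    (isWeightedZeroSumOn_uSet_of_forall_prime (Nat.odd_mul.1 hm).2 hTbal)⟩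

lemma natCast_dvd_natCast_iff_of_dvd {m a b : ℕ} (ha : a ∣ m) :
    (a : ZMod m) ∣ (b : ZMod m) ↔ a ∣ b := by
  refine ⟨fun h => ?_, fun h => Nat.cast_dvd_cast h⟩
  simpa [natCast_eq_zero_iff] using map_dvd (castHom ha (ZMod a)) h

lemma exists_weightedZeroSumFree_uSet {m : ℕ} (hm : m ≠ 0) :
    ∃ x : Fin (Ω m) → ZMod m, WeightedZeroSumFree (USet m) x := by
  set l := m.primeFactorsList
  have hsucc {i : ℕ} (hi : i < l.length) :
      (l.take (i + 1)).prod = (l.take i).prod * l[i] := List.prod_take_succ _ _ hi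
  refine ⟨_, weightedZeroSumFree_isUnit_of_dvd_chain (x := fun i => ((l.take i).prod : ZMod m))
    (fun i => Nat.cast_dvd_cast ((List.take_prefix_take_left i.le_succ).sublist.prod_dvd_prod))
    fun i hi => ?_⟩
  rw [ArithmeticFunction.cardFactors_apply] at hi
  have hdvd : (l.take (i + 1)).prod ∣ m :=
    (List.take_sublist _ _).prod_dvd_prod.trans (Nat.prod_primeFactorsList hm).dvd
  have hpos : 0 < (l.take i).prod :=
    List.prod_pos fun p hp => (Nat.prime_of_mem_primeFactorsList (List.mem_of_mem_take hp)).pos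
  have hprime : l[i].Prime := Nat.prime_of_mem_primeFactorsList (List.getElem_mem hi)
  rw [natCast_dvd_natCast_iff_of_dvd hdvd, hsucc hi]
  exact Nat.not_dvd_of_pos_of_lt hpos (lt_mul_of_one_lt_right hpos hprime.one_lt)

end UnitWeights

section SquareWeights

lemma card_le_two_mul_card_unitSquares_add_one {F : Type*} [Field F] [Fintype F] [DecidableEq F] :
    Fintype.card F ≤ 2 * #{a : F | IsUnit a ∧ IsSquare a} + 1 := by
  have hfiber : ∀ b ∈ Finset.univ.image fun u : Fˣ => (u : F) ^ 2,
      #{u : Fˣ | (u : F) ^ 2 = b} ≤ 2 := by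
    simp only [Finset.mem_image, Finset.mem_univ, true_and, forall_exists_index]
    rintro _ v rfl
    refine (Finset.card_le_card (t := {v, -v}) fun u hu => ?_).trans Finset.card_le_two
    simpa [sq_eq_sq_iff_eq_or_eq_neg, Units.ext_iff] using hu
  have himage : (Finset.univ.image fun u : Fˣ => (u : F) ^ 2) ⊆
      ({a : F | IsUnit a ∧ IsSquare a} : Finset F) :=
    Finset.image_subset_iff.2 fun u _ =>
      Finset.mem_filter.2 ⟨Finset.mem_univ _, u.isUnit.pow 2, IsSquare.sq _⟩
  have hcard := Finset.card_le_mul_card_image _ 2 hfiber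
  have hle := Finset.card_le_card himage
  rw [Finset.card_univ, Fintype.card_units] at hcard
  omega

variable {q : ℕ} [hq : Fact q.Prime]

lemma image_unitSquares_add_add_eq_univ (hq7 : 7 ≤ q) {a b c : ZMod q}
    (ha : a ≠ 0) (hb : b ≠ 0) (hc : c ≠ 0) :
    (· * a) '' unitSquares (ZMod q) + (· * b) '' unitSquares (ZMod q) +
      (· * c) '' unitSquares (ZMod q) = Set.univ := by
  classical
  set Q : Finset (ZMod q) := {a | IsUnit a ∧ IsSquare a}
  have hQ : (Q : Set (ZMod q)) = unitSquares (ZMod q) := by ext; simp [Q, unitSquares]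
  have hcardQ : q ≤ 2 * #Q + 1 := by
    simpa only [ZMod.card] using card_le_two_mul_card_unitSquares_add_one (F := ZMod q)
  have hcard {d : ZMod q} (hd : d ≠ 0) : #(Q.image (· * d)) = #Q :=
    Finset.card_image_of_injective _ (mul_left_injective₀ hd)
  have hne {d : ZMod q} : (Q.image (· * d)).Nonempty :=
    (Finset.card_pos.1 (by omega)).image _
  have hab := ZMod.cauchy_davenport hq.out (hne (d := a)) (hne (d := b))
  have habc := ZMod.cauchy_davenport hq.out ((hne (d := a)).add (hne (d := b))) (hne (d := c))
  rw [hcard ha, hcard hb] at hab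
  rw [hcard hc] at habc
  have hodd : q % 2 = 1 := Nat.odd_iff.1 (hq.out.odd_of_ne_two (by omega))
  have huniv : Q.image (· * a) + Q.image (· * b) + Q.image (· * c) = Finset.univ := by
    refine Finset.eq_univ_of_card _ (le_antisymm (Finset.card_le_univ _) ?_)
    rw [ZMod.card]
    omega
  simpa only [Finset.coe_add, Finset.coe_image, hQ, Finset.coe_univ] using
    congrArg ((↑) : Finset (ZMod q) → Set (ZMod q)) huniv

lemma isWeightedZeroSumOn_unitSquares (hq7 : 7 ≤ q) {y : ι → ZMod q} {I : Finset ι}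
    (hI : 2 < #{i ∈ I | y i ≠ 0}) : IsWeightedZeroSumOn (unitSquares (ZMod q)) y I := by
  classical
  obtain ⟨i, j, k, hi, hj, hk, hij, hik, hjk⟩ := Finset.two_lt_card_iff.1 hI
  rw [Finset.mem_filter] at hi hj hk
  refine .of_subset (J := {i, j, k}) ⟨1, one_mem_unitSquares⟩ ?_ ?_
  · simp [Finset.insert_subset_iff, hi.1, hj.1, hk.1]
  · rw [Finset.sum_insert (by simp [hij, hik]), Finset.sum_pair hjk, ← add_assoc]
    exact image_unitSquares_add_add_eq_univ hq7 hi.2 hj.2 hk.2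

lemma weightedZeroSumFree_unitSquares_one_neg {F : Type*} [Field F] {g : F} (hg : ¬ IsSquare g) :
    WeightedZeroSumFree (unitSquares F) ![1, -g] := by
  rintro I hI ⟨a, ha, hsum⟩
  have hg0 : g ≠ 0 := by rintro rfl; exact hg IsSquare.zero
  rw [← Finset.univ_inter I, ← Finset.sum_ite_mem, Fin.sum_univ_two] at hsum
  by_cases h0 : 0 ∈ I <;> by_cases h1 : 1 ∈ I
  · simp only [h0, h1, if_true, Matrix.cons_val, mul_one, mul_neg, add_neg_eq_zero] at hsum
    refine hg ?_
    rw [eq_div_of_mul_eq (ha 1 h1).1.ne_zero ((mul_comm g _).trans hsum.symm)]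
    exact (ha 0 h0).2.div (ha 1 h1).2
  · exact (ha 0 h0).1.ne_zero (by simpa [h0, h1] using hsum)
  · exact (ha 1 h1).1.ne_zero (by simpa [h0, h1, hg0] using hsum)
  · obtain ⟨i, hi⟩ := hI
    fin_cases i
    exacts [h0 hi, h1 hi]

end SquareWeights

section DavenportConstant

lemma davW_eq_add_one {n k : ℕ} {A : Set (ZMod n)}
    (hupper : ∀ S : Fin (k + 1) → ZMod n, HasWZSSub A S) {S : Fin k → ZMod n}
    (hlower : WeightedZeroSumFree A S) : DavW n A = k + 1 := by
  refine le_antisymm (Nat.sInf_le ⟨k.succ_pos, hupper⟩) (le_csInf ⟨_, k.succ_pos, hupper⟩ ?_)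
  rintro l ⟨-, hl⟩
  by_contra! hlk
  obtain ⟨I, hI, hzero⟩ := hl (S ∘ Fin.castLE (Nat.le_of_lt_succ hlk))
  exact hlower.comp_injective (Fin.castLE_injective _) I hI hzero

variable {m q : ℕ} [hq : Fact q.Prime]

lemma exists_isWeightedZeroSumOn_uSet_unitSquares (hm : Odd m) (hq7 : 7 ≤ q) (x : ι → ℕ)
    (y : ι → ZMod q) {s : Finset ι} (hs : Ω m + 3 ≤ #s) :
    ∃ I : Finset ι, I.Nonempty ∧ IsWeightedZeroSumOn (USet m) (fun i => (x i : ZMod m)) I ∧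
      IsWeightedZeroSumOn (unitSquares (ZMod q)) y I := by
  obtain ⟨d, k, rfl, T, -, z, hxz, hTcard, hTbal⟩ := exists_balanced_subset (x := x) hm.pos.ne' hs
  have hk : Odd k := (Nat.odd_mul.1 hm).2
  by_cases hnonzero : 2 < #{i ∈ T | y i ≠ 0}
  · exact ⟨T, Finset.card_pos.1 (by omega),
      .uSet_mul_left hm.pos.ne' hxz (isWeightedZeroSumOn_uSet_of_forall_prime hk hTbal),
      isWeightedZeroSumOn_unitSquares hq7 hnonzero⟩
  · have hsplit : #{i ∈ T | y i = 0} + #{i ∈ T | y i ≠ 0} = #T :=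
      Finset.card_filter_add_card_filter_not _
    obtain ⟨I, hIT, hI, hzero⟩ :=
      exists_isWeightedZeroSumOn_uSet hk z (s := {i ∈ T | y i = 0}) (by omega)
    have hmem {i : ι} (hi : i ∈ I) : i ∈ T ∧ y i = 0 := Finset.mem_filter.1 (hIT hi)
    exact ⟨I, hI, .uSet_mul_left hm.pos.ne' (fun i hi => hxz i (hmem hi).1) hzero,
      .of_forall_eq_zero one_mem_unitSquares fun i hi => (hmem hi).2⟩

lemma jacobiSym_eq_one_iff_mem_unitSquares {a : ℤ} :
    jacobiSym a q = 1 ↔ (a : ZMod q) ∈ unitSquares (ZMod q) := by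
  rw [← jacobiSym.legendreSym.to_jacobiSym, unitSquares, Set.mem_ofPred_eq, isUnit_iff_ne_zero]
  by_cases ha : (a : ZMod q) = 0
  · simp [ha, (legendreSym.eq_zero_iff q a).2 ha]
  · simp [ha, legendreSym.eq_one_iff q ha]

lemma gcd_val_eq_one_of_isUnit {n m : ℕ} (hmn : m ∣ n) {a : ZMod n} (ha : IsUnit a) :
    (a.val : ℤ).gcd m = 1 := by
  rw [Int.gcd_natCast_natCast]
  exact (ZMod.val_coe_unit_coprime ha.unit).coprime_dvd_right hmn

lemma lSet_eq_preimage [NeZero m] (h : m.Coprime q) :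
    LSet (m * q) m = ZMod.chineseRemainder h ⁻¹' (USet m ×ˢ unitSquares (ZMod q)) := by
  ext a
  have hsnd : (ZMod.chineseRemainder h a).2 = ((a.val : ℤ) : ZMod q) := by
    rw [← ZMod.natCast_zmod_val a, chineseRemainder_natCast, ZMod.natCast_zmod_val,
      Int.cast_natCast]
  have hunit : IsUnit a ↔
      IsUnit (ZMod.chineseRemainder h a).1 ∧ IsUnit (ZMod.chineseRemainder h a).2 := by
    rw [← Prod.isUnit_iff, MulEquiv.isUnit_map]
  have hjacobi (ha : IsUnit a) : jacobiSym a.val (m * q) = jacobiSym a.val m ↔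
      (ZMod.chineseRemainder h a).2 ∈ unitSquares (ZMod q) := by
    rw [jacobiSym.mul_right, hsnd, ← jacobiSym_eq_one_iff_mem_unitSquares,
      mul_eq_left₀ (jacobiSym.ne_zero (gcd_val_eq_one_of_isUnit (dvd_mul_right m q) ha))]
  constructor
  · rintro ⟨ha, hsymbol⟩
    exact ⟨(hunit.1 ha).1, (hjacobi ha).1 hsymbol⟩
  · rintro ⟨hfst, hsquare⟩
    have ha : IsUnit a := hunit.2 ⟨hfst, hsquare.1⟩
    exact ⟨ha, (hjacobi ha).2 hsquare⟩

lemma hasWZSSub_lSet (hm : Odd m) (hq7 : 7 ≤ q) (h : m.Coprime q)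
    (S : Fin (Ω m + 3) → ZMod (m * q)) : HasWZSSub (LSet (m * q) m) S := by
  have : NeZero m := ⟨hm.pos.ne'⟩
  obtain ⟨I, hI, hx, hy⟩ := exists_isWeightedZeroSumOn_uSet_unitSquares hm hq7
    (fun i => (S i).val) (fun i => ((S i).val : ZMod q)) (s := Finset.univ) (by simp)
  refine ⟨I, hI, ?_⟩
  rw [lSet_eq_preimage h]
  refine (isWeightedZeroSumOn_preimage _).2 ?_
  convert hx.prodMk hy using 1
  ext i : 1
  rw [Function.comp_apply, ← chineseRemainder_natCast h, ZMod.natCast_zmod_val]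

lemma exists_weightedZeroSumFree_lSet [NeZero m] (hq2 : q ≠ 2) (h : m.Coprime q) :
    ∃ S : Fin (Ω m + 2) → ZMod (m * q), WeightedZeroSumFree (LSet (m * q) m) S := by
  obtain ⟨x, hx⟩ := exists_weightedZeroSumFree_uSet (NeZero.ne m)
  obtain ⟨g, hg⟩ := FiniteField.exists_nonsquare (F := ZMod q) (by rwa [ZMod.ringChar_zmod_n])
  rw [lSet_eq_preimage h]
  exact ⟨_, ((hx.sumElim (weightedZeroSumFree_unitSquares_one_neg hg)).comp_injective
    finSumFinEquiv.symm.injective).preimage_symm_comp (ZMod.chineseRemainder h)⟩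

theorem davW_lSet (hm : Odd m) (hq7 : 7 ≤ q) (h : m.Coprime q) :
    DavW (m * q) (LSet (m * q) m) = Ω m + 3 := by
  have : NeZero m := ⟨hm.pos.ne'⟩
  obtain ⟨S, hS⟩ := exists_weightedZeroSumFree_lSet (by omega) h
  exact davW_eq_add_one (hasWZSSub_lSet hm hq7 h) hS

lemma jSet_eq_lSet_sq {n m : ℕ} (hmn : m ∣ n) : JSet n = LSet n (m ^ 2) := by
  ext a
  refine and_congr_right fun ha => ?_
  rw [jacobiSym.pow_right, jacobiSym.sq_one (gcd_val_eq_one_of_isUnit hmn ha)]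

theorem davenport_S_ppq_general (hm : Odd m) (hq7 : 7 ≤ q) (h : m.Coprime q) :
    DavW (m ^ 2 * q) (JSet (m ^ 2 * q)) = 2 * Ω m + 3 := by
  rw [jSet_eq_lSet_sq ((dvd_pow_self m two_ne_zero).mul_right q),
    davW_lSet hm.pow hq7 (h.pow_left 2), ArithmeticFunction.cardFactors_pow]

end DavenportConstant

end WeightedZeroSum

theorem davenport_S_ppq (n p' q : ℕ) (hp' : p'.Prime) (hq : q.Prime) (hne : p' ≠ q)
    (hp7 : 7 ≤ p') (hq7 : 7 ≤ q) (hn : n = p' ^ 2 * q) :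
    DavW n (JSet n) = 5 := by
  subst hn
  have : Fact q.Prime := ⟨hq⟩
  have hcoprime : p'.Coprime q := (Nat.coprime_primes hp' hq).2 hne
  rw [davenport_S_ppq_general (hp'.odd_of_ne_two (by omega)) hq7 hcoprime,
    ArithmeticFunction.cardFactors_apply_prime hp']
end

section
/- Let n be odd and squarefree with every prime divisor of n at least 7 and Ω(n) ∉ {2, 3}, let p' be a prime divisor of n, and let A = L(n;p'). Then a sequence S in Z_n is an A-extremal sequence for the Davenport constant if and only if S is a U(n)-extremal sequence for the Davenport constant. -/
open scoped BigOperators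

/-!
By the Chinese remainder theorem, a zero-sum problem over `ZMod n` with unit weights splits into
one problem over `ZMod q` for each prime `q ∣ n`. With arbitrary weights the problem modulo `q` on
an index set `J` is solvable exactly when the number of `i ∈ J` with `q ∤ S i` is not `1`. A weight
lies in `L(n;p')` when its Legendre symbols at the primes `q ≠ p'` multiply to `1`, and a solution
can be corrected to satisfy this:

* If some `q ≠ p'` does not divide `S i` for at least three (or for no) `i ∈ J`, then by
  Cauchy–Davenport the weights modulo `q` can be chosen with prescribed Legendre symbols, because
  the residues of a given symbol number `(q - 1) / 2` and `3 ((q - 1) / 2 - 1) + 1 ≥ q` for `q ≥ 7`.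
* If each `q ≠ p'` leaves exactly two indices of `J`, but `q₁` and `q₂` leave different pairs, then
  some `j` satisfies `q₁ ∤ S j` and `q₂ ∣ S j`. The weights modulo `q₁` then take prescribed symbols
  except at `j`, where the symbol is corrected through the free weight modulo `q₂`.

The remaining possibility, that all `q ≠ p'` leave the same pair, cannot occur for every admissible
`J` once the sequence has at least four terms. Hence sequences of length at least four have a
`U(n)`-weighted zero-sum subsequence if and only if they have an `L(n;p')`-weighted one, and for
`Ω(n) ≥ 4` the extremal sequences are that long.
-/

section LocalWeights
open Finset
open scoped Pointwise

theorem min_le_card_sum_of_nonempty {ι : Type*} {ℓ : ℕ} (hℓ : ℓ.Prime) (J : Finset ι)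
    (A : ι → Finset (ZMod ℓ)) (hA : ∀ i ∈ J, (A i).Nonempty) :
    min ℓ (∑ i ∈ J, (#(A i) - 1) + 1) ≤ #(∑ i ∈ J, A i) := by
  classical
  induction J using Finset.induction_on with
  | empty => simp
  | insert i J hi ih =>
    simp only [mem_insert, forall_eq_or_imp] at hA
    have ih' := ih hA.2
    have hpos : 0 < #(∑ i ∈ J, A i) := by
      have := hℓ.pos
      omega
    have hcd := ZMod.cauchy_davenport hℓ hA.1 (card_pos.1 hpos)
    have := hA.1.card_pos
    rw [sum_insert hi, sum_insert hi]
    omega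

theorem exists_sum_eq_zero_of_le_sum_card {ι : Type*} {ℓ : ℕ} (hℓ : ℓ.Prime) (J : Finset ι)
    (A : ι → Finset (ZMod ℓ)) (hA : ∀ i ∈ J, (A i).Nonempty)
    (hcard : ℓ ≤ ∑ i ∈ J, (#(A i) - 1) + 1) :
    ∃ x : ι → ZMod ℓ, (∀ i ∈ J, x i ∈ A i) ∧ ∑ i ∈ J, x i = 0 := by
  have : Fact ℓ.Prime := ⟨hℓ⟩
  have hfull : ∑ i ∈ J, A i = univ := by
    rw [← card_eq_iff_eq_univ, ZMod.card]
    refine le_antisymm ((card_le_univ _).trans_eq (ZMod.card ℓ)) ?_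
    simpa only [min_eq_left hcard] using min_le_card_sum_of_nonempty hℓ J A hA
  have hzero : (0 : ZMod ℓ) ∈ ((∑ i ∈ J, A i : Finset (ZMod ℓ)) : Set (ZMod ℓ)) := by
    simp [hfull]
  rw [Finset.coe_sum, Set.mem_finsetSum] at hzero
  obtain ⟨x, hx, hsum⟩ := hzero
  exact ⟨x, fun i hi => by simpa using hx hi, hsum⟩

variable {ι : Type*} {ℓ : ℕ} [Fact ℓ.Prime]

theorem exists_units_sum_mul_eq_zero (J : Finset ι) (y : ι → ZMod ℓ)
    (W : ι → Finset (ZMod ℓ)ˣ) (hW : ∀ i, (W i).Nonempty)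
    (hcard : 0 < #{i ∈ J | y i ≠ 0} → ℓ ≤ ∑ i ∈ J with y i ≠ 0, (#(W i) - 1) + 1) :
    ∃ u : ι → (ZMod ℓ)ˣ, (∀ i, u i ∈ W i) ∧ ∑ i ∈ J, (u i : ZMod ℓ) * y i = 0 := by
  rcases Nat.eq_zero_or_pos #{i ∈ J | y i ≠ 0} with hzero | hpos
  · choose u hu using hW
    refine ⟨u, hu, sum_eq_zero fun i hi => mul_eq_zero_of_right _ ?_⟩
    simpa using filter_eq_empty_iff.1 (card_eq_zero.1 hzero) hi
  let A : ι → Finset (ZMod ℓ) := fun i => (W i).image fun v : (ZMod ℓ)ˣ => (v : ZMod ℓ) * y i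
  have hAcard : ∀ i ∈ J.filter (y · ≠ 0), #(A i) = #(W i) := fun i hi =>
    card_image_of_injective (W i)
      ((mul_left_injective₀ (mem_filter.1 hi).2).comp Units.val_injective)
  obtain ⟨x, hx, hsum⟩ := exists_sum_eq_zero_of_le_sum_card Fact.out _ A
    (fun i _ => (hW i).image _)
    (by rw [sum_congr rfl fun i hi => by rw [hAcard i hi]]; exact hcard hpos)
  have hu : ∀ i, ∃ u ∈ W i, i ∈ J.filter (y · ≠ 0) → (u : ZMod ℓ) * y i = x i := fun i => by
    by_cases hi : i ∈ J.filter (y · ≠ 0)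
    · obtain ⟨u, hu, hux⟩ := mem_image.1 (hx i hi)
      exact ⟨u, hu, fun _ => hux⟩
    · exact (hW i).imp fun u hu => ⟨hu, fun h => absurd h hi⟩
  choose u huW hux using hu
  refine ⟨u, huW, ?_⟩
  rw [← hsum, ← sum_congr rfl hux]
  exact (sum_filter_of_ne fun i _ => right_ne_zero_of_mul).symm

theorem card_support_ne_one_of_sum_units_mul_eq_zero {F : Type*} [Field F] [DecidableEq F]
    {J : Finset ι} {y : ι → F} (u : ι → F)
    (hu : ∀ i ∈ J, u i ≠ 0) (hsum : ∑ i ∈ J, u i * y i = 0) :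
    #{i ∈ J | y i ≠ 0} ≠ 1 := by
  intro hone
  obtain ⟨j, hj⟩ := card_eq_one.1 hone
  have hjJ : j ∈ J ∧ y j ≠ 0 := mem_filter.1 (hj ▸ mem_singleton_self j)
  rw [← sum_filter_of_ne fun i _ => right_ne_zero_of_mul, hj, sum_singleton] at hsum
  exact mul_ne_zero (hu j hjJ.1) hjJ.2 hsum

/-- The Legendre symbol on the units modulo `ℓ`, as a homomorphism to `{±1}`. -/
def legendreHom (ℓ : ℕ) [Fact ℓ.Prime] : (ZMod ℓ)ˣ →* ℤˣ :=
  (quadraticChar (ZMod ℓ)).toUnitHom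

theorem coe_legendreHom (u : (ZMod ℓ)ˣ) :
    (legendreHom ℓ u : ℤ) = quadraticChar (ZMod ℓ) u :=
  MulChar.coe_toUnitHom _ u

theorem legendreHom_surjective (hℓ : ℓ ≠ 2) : Function.Surjective (legendreHom ℓ) := by
  intro s
  rcases Int.units_eq_one_or s with rfl | rfl
  · exact ⟨1, map_one _⟩
  · obtain ⟨u, hu⟩ := quadraticChar_exists_neg_one' (F := ZMod ℓ) (by rwa [ZMod.ringChar_zmod_n])
    exact ⟨u, Units.ext (by rw [coe_legendreHom, hu]; rfl)⟩

theorem two_mul_card_legendreHom_fiber_add_one (hℓ : ℓ ≠ 2) (s : ℤˣ) :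
    2 * #{u | legendreHom ℓ u = s} + 1 = ℓ := by
  have hker : #{u | legendreHom ℓ u = s} = Nat.card (legendreHom ℓ).ker := by
    rw [← Nat.card_congr
      (MonoidHom.fiberEquivKerOfSurjective (legendreHom_surjective hℓ) s)]
    exact (Nat.subtype_card _ fun u => by simp).symm
  have hindex : (legendreHom ℓ).ker.index = 2 := by
    rw [Subgroup.index_ker, MonoidHom.range_eq_top.2 (legendreHom_surjective hℓ),
      Subgroup.card_top, Nat.card_eq_fintype_card, Fintype.card_units_int]
  have hunits := (legendreHom ℓ).ker.card_mul_index
  rw [hindex, Nat.card_eq_fintype_card (α := (ZMod ℓ)ˣ), ZMod.card_units] at hunits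
  have := (Fact.out : ℓ.Prime).pos
  omega

theorem legendreHom_fiber_nonempty (hℓ : ℓ ≠ 2) (s : ℤˣ) :
    ({u | legendreHom ℓ u = s} : Finset (ZMod ℓ)ˣ).Nonempty :=
  (legendreHom_surjective hℓ s).imp fun u hu => by simpa using hu

variable {J : Finset ι} {y : ι → ZMod ℓ}

theorem exists_units_of_card_support_ne_one (hℓ : ℓ ≠ 2) (hJ : #{i ∈ J | y i ≠ 0} ≠ 1) :
    ∃ u : ι → (ZMod ℓ)ˣ, ∑ i ∈ J, (u i : ZMod ℓ) * y i = 0 := by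
  obtain ⟨u, -, hu⟩ := exists_units_sum_mul_eq_zero J y (fun _ => univ)
    (fun _ => univ_nonempty) fun hpos => by
      have hJ2 : 2 ≤ #{i ∈ J | y i ≠ 0} := by omega
      have hℓ3 : 3 ≤ ℓ := (Fact.out : ℓ.Prime).two_le.lt_of_ne' hℓ
      rw [sum_const, smul_eq_mul, card_univ, ZMod.card_units]
      have := Nat.mul_le_mul_right (ℓ - 1 - 1) hJ2
      omega
  exact ⟨u, hu⟩

theorem exists_units_legendreHom_eq_of_ne (hℓ : 5 ≤ ℓ) {j : ι} (hj : j ∈ J)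
    (hyj : y j ≠ 0) (hJ : #{i ∈ J | y i ≠ 0} ≠ 1) (s : ι → ℤˣ) :
    ∃ u : ι → (ZMod ℓ)ˣ, (∀ i ≠ j, legendreHom ℓ (u i) = s i) ∧
      ∑ i ∈ J, (u i : ZMod ℓ) * y i = 0 := by
  classical
  have hj' : j ∈ ({i ∈ J | y i ≠ 0} : Finset ι) := mem_filter.2 ⟨hj, hyj⟩
  have hJpos := card_pos.2 ⟨j, hj'⟩
  obtain ⟨k, hk, hkj⟩ := exists_mem_ne (show 1 < #{i ∈ J | y i ≠ 0} by omega) j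
  let W : ι → Finset (ZMod ℓ)ˣ := fun i =>
    if i = j then univ else ({v | legendreHom ℓ v = s i} : Finset (ZMod ℓ)ˣ)
  have hcard : ℓ ≤ ∑ i ∈ J with y i ≠ 0, (#(W i) - 1) + 1 := calc
    ℓ ≤ ∑ i ∈ {j, k}, (#(W i) - 1) + 1 := by
      have := two_mul_card_legendreHom_fiber_add_one (by omega : ℓ ≠ 2) (s k)
      simp only [sum_pair hkj.symm, W, if_pos, if_neg hkj, card_univ, ZMod.card_units]
      omega
    _ ≤ _ := by
      gcongr
      simp [insert_subset_iff, hj, hyj, (mem_filter.1 hk).1, (mem_filter.1 hk).2]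
  obtain ⟨u, huW, hu⟩ := exists_units_sum_mul_eq_zero J y W (fun i => by
    by_cases h : i = j
    · simp [W, h]
    · simpa only [W, if_neg h] using legendreHom_fiber_nonempty (by omega) (s i)) fun _ => hcard
  exact ⟨u, fun i hi => by simpa [W, hi] using huW i, hu⟩

theorem exists_units_legendreHom_eq (hℓ : 7 ≤ ℓ) (hJ1 : #{i ∈ J | y i ≠ 0} ≠ 1)
    (hJ2 : #{i ∈ J | y i ≠ 0} ≠ 2) (s : ι → ℤˣ) :
    ∃ u : ι → (ZMod ℓ)ˣ, (∀ i, legendreHom ℓ (u i) = s i) ∧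
      ∑ i ∈ J, (u i : ZMod ℓ) * y i = 0 := by
  have hℓ2 : ℓ ≠ 2 := by omega
  obtain ⟨u, huW, hu⟩ := exists_units_sum_mul_eq_zero J y
    (fun i => {v | legendreHom ℓ v = s i})
    (fun i => legendreHom_fiber_nonempty hℓ2 (s i)) fun hpos => by
      have hJ3 : 3 ≤ #{i ∈ J | y i ≠ 0} := by omega
      have hodd := two_mul_card_legendreHom_fiber_add_one hℓ2 1
      have hfiber : ∀ i, #{v | legendreHom ℓ v = s i} = (ℓ - 1) / 2 := fun i => by
        have := two_mul_card_legendreHom_fiber_add_one hℓ2 (s i)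
        omega
      simp only [hfiber, sum_const, smul_eq_mul]
      have := Nat.mul_le_mul_right ((ℓ - 1) / 2 - 1) hJ3
      omega
  exact ⟨u, fun i => by simpa using huW i, hu⟩

end LocalWeights

section Combinatorics
open Finset

variable {ι P : Type*} [DecidableEq ι]

/-- The index set `J` meets every member of the family `N` in zero or in at least two points.
For the coordinate supports of a sequence over a product of fields of odd prime order, this is
solvability of the zero-sum problem on `J` with arbitrary unit weights. -/
def AvoidsSingletons (N : P → Finset ι) (J : Finset ι) : Prop :=
  ∀ q, #(J ∩ N q) ≠ 1

/-- Away from the coordinate `r`, all members of the family `N` meet `J` in one and the same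
pair. This is the configuration in which the signs of the weights cannot be adjusted. -/
def MeetsInPair (N : P → Finset ι) (r : P) (J : Finset ι) : Prop :=
  ∃ B : Finset ι, #B = 2 ∧ ∀ q ≠ r, J ∩ N q = B

section

variable {N : P → Finset ι} {r s : P} {B J : Finset ι} (hsr : s ≠ r)
  (hpair : ∀ J : Finset ι, J.Nonempty → AvoidsSingletons N J → MeetsInPair N r J)
include hsr hpair

theorem card_inter_eq_one_of_forall_meetsInPair (hJ : J.Nonempty)
    (hdisj : ∀ q ≠ r, J ∩ N q = ∅) : #(J ∩ N r) = 1 := by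
  by_contra hne
  obtain ⟨B, hB, hBJ⟩ := hpair J hJ fun q => by
    by_cases hq : q = r
    · rwa [hq]
    · simp [hdisj q hq]
  simp [← hBJ s hsr, hdisj s hsr] at hB

theorem inter_eq_of_forall_meetsInPair (hB : #B = 2) (hBN : ∀ q ≠ r, B ⊆ N q) (hBJ : B ⊆ J)
    (hJ : #(J ∩ N r) ≠ 1) : ∀ q ≠ r, J ∩ N q = B := by
  have hsub : ∀ q ≠ r, B ⊆ J ∩ N q := fun q hq => subset_inter hBJ (hBN q hq)
  obtain ⟨C, hC, hCJ⟩ := hpair J ((card_pos.1 (by omega)).mono hBJ) fun q => by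
    by_cases hq : q = r
    · rwa [hq]
    · have := card_le_card (hsub q hq)
      omega
  have hBC : B = C := eq_of_subset_of_card_le (hCJ s hsr ▸ hsub s hsr) (by omega)
  exact hBC ▸ hCJ

theorem mem_of_forall_meetsInPair (hB : #B = 2) (hBN : ∀ q ≠ r, B ⊆ N q) (hBJ : B ⊆ J)
    (hJ : #(J ∩ N r) ≠ 1) {w : ι} (hwJ : w ∈ J) (hwB : w ∉ B) : w ∈ N r := by
  have hw : #({w} ∩ N r) = 1 :=
    card_inter_eq_one_of_forall_meetsInPair hsr hpair (singleton_nonempty w) fun q hq => by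
      rw [singleton_inter_of_notMem]
      intro hwq
      rw [← inter_eq_of_forall_meetsInPair hsr hpair hB hBN hBJ hJ q hq] at hwB
      exact hwB (mem_inter.2 ⟨hwJ, hwq⟩)
  by_contra hwr
  simp [hwr] at hw

end

theorem exists_avoidsSingletons_not_meetsInPair [Fintype ι] {N : P → Finset ι} {r s : P}
    (hι : 4 ≤ Fintype.card ι) (hsr : s ≠ r) {I : Finset ι} (hI : I.Nonempty)
    (hIN : AvoidsSingletons N I) :
    ∃ J : Finset ι, J.Nonempty ∧ AvoidsSingletons N J ∧ ¬ MeetsInPair N r J := by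
  by_contra! hpair
  obtain ⟨B, hB, hBI⟩ := hpair I hI hIN
  have hBsubI : B ⊆ I := hBI s hsr ▸ inter_subset_left
  have hBN : ∀ q ≠ r, B ⊆ N q := fun q hq => hBI q hq ▸ inter_subset_right
  have hcompl_card : 2 ≤ #Bᶜ := by
    rw [card_compl]
    omega
  have huniv : #(univ ∩ N r) ≠ 1 := by
    intro hone
    have hBr : B ∩ N r = ∅ := by
      have hIr : #(I ∩ N r) ≤ 1 := hone ▸ card_le_card (inter_subset_inter_right (subset_univ I))
      have hIr0 : I ∩ N r = ∅ := card_eq_zero.1 (by have := hIN r; omega)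
      exact subset_empty.1 (hIr0 ▸ inter_subset_inter_right hBsubI)
    have hcompl : Bᶜ ⊆ univ ∩ N r := fun w hw => by
      have hwB := mem_compl.1 hw
      by_contra hwr
      rw [univ_inter] at hwr
      refine hwr (mem_of_forall_meetsInPair hsr hpair hB hBN (subset_insert w B) ?_
        (mem_insert_self w B) hwB)
      rw [insert_inter_of_notMem hwr, hBr, card_empty]
      exact zero_ne_one
    have := card_le_card hcompl
    omega
  have hcompl_inter : #(Bᶜ ∩ N r) = 1 :=
    card_inter_eq_one_of_forall_meetsInPair hsr hpair (card_pos.1 (by omega)) fun q hq => by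
      rw [← inter_eq_of_forall_meetsInPair hsr hpair hB hBN (subset_univ B) huniv q hq, univ_inter,
        inter_comm, inter_compl]
  have hcompl : Bᶜ ⊆ N r := fun w hw =>
    mem_of_forall_meetsInPair hsr hpair hB hBN (subset_univ B) huniv (mem_univ w) (mem_compl.1 hw)
  rw [inter_eq_left.2 hcompl] at hcompl_inter
  omega

end Combinatorics

section Product
open Finset

variable {ι P : Type*} {p : P → ℕ} [∀ q, Fact (p q).Prime]

/-- The family `u` of unit weights solves the zero-sum problem for `y` on `J`: in each coordinate
the weighted sum over `J` vanishes. -/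
def IsZeroSumWeight (y : ι → ∀ q, ZMod (p q)) (J : Finset ι)
    (u : ι → ∀ q, (ZMod (p q))ˣ) : Prop :=
  ∀ q, ∑ i ∈ J, (u i q : ZMod (p q)) * y i q = 0

/-- The set of indices at which the `q`-th coordinate of the sequence `y` is nonzero. -/
def coordSupport [Fintype ι] (y : ι → ∀ q, ZMod (p q)) (q : P) : Finset ι :=
  {i | y i q ≠ 0}

variable {y : ι → ∀ q, ZMod (p q)} {J : Finset ι}

theorem IsZeroSumWeight.update [DecidableEq P] {u : ι → ∀ q, (ZMod (p q))ˣ}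
    (hu : IsZeroSumWeight y J u) {q : P} {v : ι → (ZMod (p q))ˣ}
    (hv : ∑ i ∈ J, (v i : ZMod (p q)) * y i q = 0) :
    IsZeroSumWeight y J fun i => Function.update (u i) q (v i) := by
  intro t
  by_cases ht : t = q
  · subst ht
    simpa using hv
  · simpa [ht] using hu t

section Signs

variable [Fintype P] [DecidableEq P]

/-- The product of the Legendre symbols of the coordinates of `u` other than the `r`-th. For
`u ∈ U(n)` and `r = p'` it is `(u/n)(u/p')`, so it equals `1` exactly on `L(n;p')`. -/
def signAway (r : P) (u : ∀ q, (ZMod (p q))ˣ) : ℤˣ :=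
  ∏ q ∈ univ.erase r, legendreHom (p q) (u q)

theorem signAway_update {r q : P} (hq : q ≠ r) (u : ∀ q, (ZMod (p q))ˣ) (v : (ZMod (p q))ˣ) :
    signAway r (Function.update u q v) =
      legendreHom (p q) v * (legendreHom (p q) (u q) * signAway r u) := by
  have hmem : q ∈ univ.erase r := mem_erase.2 ⟨hq, mem_univ q⟩
  have hrest : ∏ t ∈ (univ.erase r).erase q, legendreHom (p t) (Function.update u q v t) =
      ∏ t ∈ (univ.erase r).erase q, legendreHom (p t) (u t) :=
    prod_congr rfl fun t ht => by rw [Function.update_of_ne (ne_of_mem_erase ht)]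
  rw [signAway, signAway, ← mul_prod_erase _ _ hmem, ← mul_prod_erase (univ.erase r) _ hmem, hrest,
    Function.update_self, ← mul_assoc (legendreHom (p q) (u q)), Int.units_mul_self, one_mul]

theorem signAway_update_eq_one {r q : P} (hq : q ≠ r) {u : ∀ q, (ZMod (p q))ˣ}
    {v : (ZMod (p q))ˣ} (hv : legendreHom (p q) v = legendreHom (p q) (u q) * signAway r u) :
    signAway r (Function.update u q v) = 1 := by
  rw [signAway_update hq, hv, Int.units_mul_self]

end Signs

variable [Fintype ι] [DecidableEq ι]

theorem inter_coordSupport (y : ι → ∀ q, ZMod (p q)) (J : Finset ι) (q : P) :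
    J ∩ coordSupport y q = {i ∈ J | y i q ≠ 0} := by
  rw [coordSupport, inter_filter, inter_univ]

theorem AvoidsSingletons.exists_isZeroSumWeight (hJ : AvoidsSingletons (coordSupport y) J)
    (hp : ∀ q, p q ≠ 2) : ∃ u, IsZeroSumWeight y J u := by
  choose u hu using fun q => exists_units_of_card_support_ne_one (hp q)
    (inter_coordSupport y J q ▸ hJ q)
  exact ⟨fun i q => u q i, hu⟩

variable [Fintype P] [DecidableEq P] {r : P}

theorem AvoidsSingletons.exists_signAway_eq_one_of_card_ne_two
    (hJ : AvoidsSingletons (coordSupport y) J) (hp : ∀ q, p q ≠ 2) {q : P} (hqr : q ≠ r)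
    (hpq : 7 ≤ p q) (hJq : #(J ∩ coordSupport y q) ≠ 2) :
    ∃ u, IsZeroSumWeight y J u ∧ ∀ i, signAway r (u i) = 1 := by
  obtain ⟨u, hu⟩ := hJ.exists_isZeroSumWeight hp
  obtain ⟨v, hvsign, hv⟩ := exists_units_legendreHom_eq hpq (inter_coordSupport y J q ▸ hJ q)
    (inter_coordSupport y J q ▸ hJq) fun i => legendreHom (p q) (u i q) * signAway r (u i)
  exact ⟨_, hu.update hv, fun i => signAway_update_eq_one hqr (hvsign i)⟩

theorem AvoidsSingletons.exists_signAway_eq_one_of_mem_of_notMem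
    (hJ : AvoidsSingletons (coordSupport y) J) (hp : ∀ q, p q ≠ 2) {q₁ q₂ : P} (hq₁ : q₁ ≠ r)
    (hq₂ : q₂ ≠ r) (hpq₁ : 5 ≤ p q₁) {j : ι} (hj : j ∈ J) (hj₁ : j ∈ coordSupport y q₁)
    (hj₂ : j ∉ coordSupport y q₂) :
    ∃ u, IsZeroSumWeight y J u ∧ ∀ i, signAway r (u i) = 1 := by
  have hyj₁ : y j q₁ ≠ 0 := by simpa [coordSupport] using hj₁
  have hyj₂ : y j q₂ = 0 := by simpa [coordSupport] using hj₂
  obtain ⟨u, hu⟩ := hJ.exists_isZeroSumWeight hp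
  obtain ⟨v, hvsign, hv⟩ := exists_units_legendreHom_eq_of_ne hpq₁ hj hyj₁
    (inter_coordSupport y J q₁ ▸ hJ q₁) fun i => legendreHom (p q₁) (u i q₁) * signAway r (u i)
  let u₁ : ι → ∀ q, (ZMod (p q))ˣ := fun i => Function.update (u i) q₁ (v i)
  have hu₁ : IsZeroSumWeight y J u₁ := hu.update hv
  obtain ⟨w, hw⟩ := legendreHom_surjective (hp q₂)
    (legendreHom (p q₂) (u₁ j q₂) * signAway r (u₁ j))
  -- Since `y j q₂ = 0`, the `q₂`-coordinate of the `j`-th weight can be chosen freely.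
  have hfree : ∑ i ∈ J, (Function.update (u₁ · q₂) j w i : ZMod (p q₂)) * y i q₂ = 0 := by
    rw [← hu₁ q₂]
    refine sum_congr rfl fun i _ => ?_
    by_cases hij : i = j
    · rw [hij, hyj₂, mul_zero, mul_zero]
    · rw [Function.update_of_ne hij]
  refine ⟨_, hu₁.update hfree, fun i => ?_⟩
  by_cases hij : i = j
  · rw [hij, Function.update_self]
    exact signAway_update_eq_one hq₂ hw
  · rw [Function.update_of_ne hij, Function.update_eq_self]
    exact signAway_update_eq_one hq₁ (hvsign i hij)

theorem AvoidsSingletons.exists_signAway_eq_one (hJ : AvoidsSingletons (coordSupport y) J)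
    (hpair : ¬ MeetsInPair (coordSupport y) r J) (hp : ∀ q, p q ≠ 2)
    (hp7 : ∀ q ≠ r, 7 ≤ p q) {s : P} (hsr : s ≠ r) :
    ∃ u, IsZeroSumWeight y J u ∧ ∀ i, signAway r (u i) = 1 := by
  by_cases htwo : ∀ q ≠ r, #(J ∩ coordSupport y q) = 2
  · obtain ⟨q, hqr, hne⟩ : ∃ q ≠ r, J ∩ coordSupport y q ≠ J ∩ coordSupport y s := by
      by_contra! heq
      exact hpair ⟨_, htwo s hsr, heq⟩
    obtain ⟨j, hjq, hjs⟩ := not_subset.1 fun hsub =>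
      hne (eq_of_subset_of_card_le hsub (by rw [htwo s hsr, htwo q hqr]))
    rw [mem_inter] at hjq
    exact hJ.exists_signAway_eq_one_of_mem_of_notMem hp hqr hsr (by have := hp7 q hqr; omega)
      hjq.1 hjq.2 fun hj => hjs (mem_inter.2 ⟨hjq.1, hj⟩)
  · push Not at htwo
    obtain ⟨q, hqr, hcard⟩ := htwo
    exact hJ.exists_signAway_eq_one_of_card_ne_two hp hqr (hp7 q hqr) hcard

end Product

section Residues
open Finset

instance fact_prime_primeFactors {n : ℕ} (q : n.primeFactors) : Fact (q : ℕ).Prime :=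
  ⟨Nat.prime_of_mem_primeFactors q.2⟩

variable {n : ℕ} (hn : Squarefree n)

/-- The Chinese remainder isomorphism for a squarefree modulus, with factors indexed by the prime
divisors. -/
noncomputable def residues : ZMod n ≃+* ∀ q : n.primeFactors, ZMod (q : ℕ) :=
  (ZMod.ringEquivCongr (by
    rw [prod_coe_sort n.primeFactors fun q => q, Nat.prod_primeFactors_of_squarefree hn])).trans
  (ZMod.prodEquivPi (fun q : n.primeFactors => (q : ℕ)) fun q r hqr =>
    (Nat.coprime_primes (Nat.prime_of_mem_primeFactors q.2)
      (Nat.prime_of_mem_primeFactors r.2)).2 (Subtype.coe_injective.ne hqr))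

theorem residues_apply (a : ZMod n) (q : n.primeFactors) :
    residues hn a q = (a.val : ZMod (q : ℕ)) := by
  have : NeZero n := ⟨hn.ne_zero⟩
  conv_lhs => rw [← ZMod.natCast_zmod_val a, map_natCast]
  rfl

include hn in
theorem jacobiSym_eq_prod_legendreSym (a : ℤ) :
    jacobiSym a n = ∏ q : n.primeFactors, legendreSym q a := by
  have hprime : jacobiSym a n = ∏ q ∈ n.primeFactors, jacobiSym a q := by
    conv_lhs => rw [← Nat.prod_primeFactorsList hn.ne_zero]
    rw [jacobiSym.list_prod_right fun q hq => (Nat.prime_of_mem_primeFactorsList hq).ne_zero,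
      Nat.primeFactors,
      List.prod_toFinset _ ((Nat.squarefree_iff_nodup_primeFactorsList hn.ne_zero).1 hn)]
  rw [hprime, ← prod_coe_sort]
  exact prod_congr rfl fun q _ => (jacobiSym.legendreSym.to_jacobiSym q a).symm

theorem residues_symm_mem_LSet {r : n.primeFactors} {u : ∀ q : n.primeFactors, (ZMod (q : ℕ))ˣ}
    (hu : signAway r u = 1) : (residues hn).symm (fun q => (u q : ZMod (q : ℕ))) ∈ LSet n r := by
  set a := (residues hn).symm fun q => (u q : ZMod (q : ℕ)) with ha
  have hlegendre : ∀ q : n.primeFactors, legendreSym q a.val = legendreHom (q : ℕ) (u q) := by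
    intro q
    rw [coe_legendreHom, legendreSym, Int.cast_natCast, ← residues_apply hn, ha,
      RingEquiv.apply_symm_apply]
  refine ⟨(Pi.isUnit_iff.2 fun q => (u q).isUnit).map (residues hn).symm, ?_⟩
  rw [jacobiSym_eq_prod_legendreSym hn, ← mul_prod_erase _ _ (mem_univ r),
    ← jacobiSym.legendreSym.to_jacobiSym]
  simp only [hlegendre]
  rw [← Units.coe_prod, ← signAway, hu, Units.val_one, mul_one]

variable {k : ℕ} {S : Fin k → ZMod n}

theorem exists_avoidsSingletons_of_hasWZSSub (hS : HasWZSSub (USet n) S) :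
    ∃ J : Finset (Fin k), J.Nonempty ∧
      AvoidsSingletons (coordSupport fun i => residues hn (S i)) J := by
  obtain ⟨J, hJ, a, ha, hsum⟩ := hS
  refine ⟨J, hJ, fun q => ?_⟩
  rw [inter_coordSupport]
  refine card_support_ne_one_of_sum_units_mul_eq_zero (fun i => residues hn (a i) q)
    (fun i hi => ?_) ?_
  · exact (Pi.isUnit_iff.1 ((ha i hi : IsUnit (a i)).map (residues hn)) q).ne_zero
  · simpa using congr_fun (congr_arg (residues hn) hsum) q

include hn in
theorem exists_not_hasWZSSub_USet (hk : k ≤ #n.primeFactors) :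
    ∃ T : Fin k → ZMod n, ¬ HasWZSSub (USet n) T := by
  obtain ⟨f⟩ : Nonempty (Fin k ↪ n.primeFactors) :=
    Function.Embedding.nonempty_of_card_le (by simpa using hk)
  refine ⟨fun i => (residues hn).symm (Pi.single (f i) 1), fun hT => ?_⟩
  obtain ⟨J, ⟨i, hi⟩, hJ⟩ := exists_avoidsSingletons_of_hasWZSSub hn hT
  refine hJ (f i) (card_eq_one.2 ⟨i, ?_⟩)
  ext j
  by_cases hji : j = i
  · simp [coordSupport, hji, hi]
  · simp [coordSupport, hji, f.injective.eq_iff, Ne.symm hji]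

theorem IsZeroSumWeight.hasWZSSub {J : Finset (Fin k)} (hJ : J.Nonempty)
    {u : Fin k → ∀ q : n.primeFactors, (ZMod (q : ℕ))ˣ}
    (hu : IsZeroSumWeight (fun i => residues hn (S i)) J u) {A : Set (ZMod n)}
    (hA : ∀ i, (residues hn).symm (fun q => (u i q : ZMod (q : ℕ))) ∈ A) : HasWZSSub A S := by
  refine ⟨J, hJ, _, fun i _ => hA i, (residues hn).injective ?_⟩
  ext q
  simpa using hu q

include hn in
theorem HasWZSSub.LSet_of_USet (hodd : Odd n) (hcard : 1 < #n.primeFactors) {r : n.primeFactors}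
    (hp7 : ∀ p : ℕ, p.Prime → p ∣ n → p ≠ r → 7 ≤ p) (hk : 4 ≤ k) (hS : HasWZSSub (USet n) S) :
    HasWZSSub (LSet n r) S := by
  have : Nontrivial n.primeFactors := Fintype.one_lt_card_iff_nontrivial.1 (by simpa using hcard)
  obtain ⟨s, hsr⟩ := exists_ne r
  obtain ⟨I, hI, hIavoid⟩ := exists_avoidsSingletons_of_hasWZSSub hn hS
  obtain ⟨J, hJ, hJavoid, hpair⟩ :=
    exists_avoidsSingletons_not_meetsInPair (by simpa using hk) hsr hI hIavoid
  have hp2 : ∀ q : n.primeFactors, (q : ℕ) ≠ 2 := fun q =>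
    hodd.ne_two_of_dvd_nat (Nat.dvd_of_mem_primeFactors q.2)
  obtain ⟨u, hu, hsign⟩ := hJavoid.exists_signAway_eq_one hpair hp2 (fun q hq =>
    hp7 q (Nat.prime_of_mem_primeFactors q.2) (Nat.dvd_of_mem_primeFactors q.2)
      (Subtype.coe_injective.ne hq)) hsr
  exact hu.hasWZSSub hn hJ fun i => residues_symm_mem_LSet hn (hsign i)

end Residues

section Davenport

variable {n : ℕ} {A B : Set (ZMod n)} {k : ℕ}

theorem HasWZSSub.mono (hAB : A ⊆ B) {S : Fin k → ZMod n} (hS : HasWZSSub A S) :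
    HasWZSSub B S := by
  obtain ⟨I, hI, a, ha, hsum⟩ := hS
  exact ⟨I, hI, a, fun i hi => hAB (ha i hi), hsum⟩

theorem not_hasWZSSub_of_length_eq_zero (hk : k = 0) (S : Fin k → ZMod n) : ¬ HasWZSSub A S := by
  subst hk
  rintro ⟨I, ⟨i, -⟩, -⟩
  exact i.elim0

theorem isExtremal_iff_of_subset (hAB : A ⊆ B) {m : ℕ}
    (hfree : ∀ j ≤ m, ∃ T : Fin j → ZMod n, ¬ HasWZSSub B T)
    (hBA : ∀ j ≥ m, ∀ T : Fin j → ZMod n, HasWZSSub B T → HasWZSSub A T)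
    (S : Fin k → ZMod n) : IsExtremal n A S ↔ IsExtremal n B S := by
  have hlong : ∀ j, (∀ T : Fin j → ZMod n, HasWZSSub B T) → m < j := fun j hj => by
    by_contra! hjm
    obtain ⟨T, hT⟩ := hfree j hjm
    exact hT (hj T)
  have hD : DavW n A = DavW n B := by
    refine congr_arg sInf (Set.ext fun j => and_congr_right fun _ => ?_)
    exact ⟨fun hj T => (hj T).mono hAB, fun hj T => hBA j (hlong j hj).le T (hj T)⟩
  rw [IsExtremal, IsExtremal, hD]
  refine and_congr_right fun hk => not_congr ⟨HasWZSSub.mono hAB, fun hS => hBA k ?_ S hS⟩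
  have hDpos : 0 < DavW n B := by
    by_contra hzero
    exact not_hasWZSSub_of_length_eq_zero (by omega) S hS
  have hmD : m < DavW n B := hlong _ (Nat.sInf_mem (Nat.nonempty_of_pos_sInf hDpos)).2
  omega

theorem LSet_subset_USet (n p : ℕ) : LSet n p ⊆ USet n := fun _ ha => ha.1

theorem LSet_self_eq_USet (p : ℕ) : LSet p p = USet p := by
  simp [LSet, USet]

end Davenport

theorem extremal_L_iff_U_general (n p' : ℕ) (hodd : Odd n) (hsf : Squarefree n)
    (hp7 : ∀ p : ℕ, p.Prime → p ∣ n → p ≠ p' → 7 ≤ p)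
    (hOmega2 : (Nat.primeFactorsList n).length ≠ 2)
    (hOmega3 : (Nat.primeFactorsList n).length ≠ 3)
    (hp' : p'.Prime) (hp'n : p' ∣ n)
    {l : ℕ} (S : Fin l → ZMod n) :
    IsExtremal n (LSet n p') S ↔ IsExtremal n (USet n) S := by
  have hcard : (Nat.primeFactorsList n).length = n.primeFactors.card :=
    (List.toFinset_card_of_nodup
      ((Nat.squarefree_iff_nodup_primeFactorsList hsf.ne_zero).1 hsf)).symm
  let r : n.primeFactors := ⟨p', Nat.mem_primeFactors.2 ⟨hp', hp'n, hsf.ne_zero⟩⟩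
  rcases eq_or_ne n p' with rfl | hnp'
  · rw [LSet_self_eq_USet]
  have hOmega1 : (Nat.primeFactorsList n).length ≠ 1 := fun h =>
    hnp' ((Nat.prime_dvd_prime_iff_eq hp'
      (ArithmeticFunction.cardFactors_eq_one_iff_prime.1 h)).1 hp'n).symm
  have hfour : 4 ≤ n.primeFactors.card := by
    have := Finset.card_pos.2 ⟨p', r.2⟩
    omega
  exact isExtremal_iff_of_subset (LSet_subset_USet n p')
    (fun _ hj => exists_not_hasWZSSub_USet hsf (hj.trans hfour))
    (fun _ hj _ => HasWZSSub.LSet_of_USet hsf hodd (by omega) (r := r) hp7 hj) S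

theorem extremal_L_iff_U (n p' : ℕ) (hodd : Odd n) (hsf : Squarefree n)
    (hp7 : ∀ p : ℕ, p.Prime → p ∣ n → 7 ≤ p)
    (hOmega2 : (Nat.primeFactorsList n).length ≠ 2)
    (hOmega3 : (Nat.primeFactorsList n).length ≠ 3)
    (hp' : p'.Prime) (hp'n : p' ∣ n)
    {l : ℕ} (S : Fin l → ZMod n) :
    IsExtremal n (LSet n p') S ↔ IsExtremal n (USet n) S :=
  extremal_L_iff_U_general n p' hodd hsf (fun p hp hpn _ => hp7 p hp hpn) hOmega2 hOmega3
    hp' hp'n S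
end
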